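/- Let d ≥ 1, q ≥ 2 an integer, J_d(u) = ∫_{‖x‖≤1} e^{−i⟨u,x⟩} dx for u ∈ ℝ^d, and let s_q : ℝ^d → [0,∞) be the q-fold convolution of the function u ↦ J_d(u)² with itself. Then for every ε > 0 there exists a measurable φ : ℝ^d → ℂ with 0 < ∫_{ℝ^d} |φ(u)|² s_q(u) du < ∞ such that ∫_{ℝ^d} ĥ(u)·φ(u)·s_q(u) du = 0 for every bounded measurable compactly supported h : ℝ^d → ℂ with support contained in ℝ^d ∖ B(0,ε). Consequently the measure S_q = s_q·Leb does not induce linear maximal rigidity on the ball B(0,ε). -/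

import Mathlib

open MeasureTheory Complex
open scoped RealInnerProductSpace ENNReal NNReal Convolution

noncomputable section

abbrev Ed (d : ℕ) := EuclideanSpace ℝ (Fin d)

/-- Fourier transform `f̂(u) = ∫ e^{-i⟨u,x⟩} f(x) dx`. -/
def FT {d : ℕ} (f : Ed d → ℂ) (u : Ed d) : ℂ :=
  ∫ x : Ed d, Complex.exp (-Complex.I * (⟪u, x⟫ : ℝ)) * f x

/-- `f` is bounded, measurable, with bounded support contained in `A`. -/
def IsCBS {d : ℕ} (A : Set (Ed d)) (f : Ed d → ℂ) : Prop :=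
  Measurable f ∧ (∃ C : ℝ, ∀ x, ‖f x‖ ≤ C) ∧
    Bornology.IsBounded (Function.support f) ∧ Function.support f ⊆ A

/-- `S` induces linear maximal rigidity on `A`. -/
def LMR {d : ℕ} (S : Measure (Ed d)) (A : Set (Ed d)) : Prop :=
  ∀ f : Ed d → ℂ, IsCBS A f → ∀ ε : ℝ, 0 < ε →
    ∃ h : Ed d → ℂ, IsCBS Aᶜ h ∧ (∫ u, ‖FT f u - FT h u‖ ^ 2 ∂S) < ε
/-- `J_d(u) = ∫_{‖x‖≤1} e^{-i⟨u,x⟩} dx`, the Fourier transform of the indicator of the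
closed unit ball; the integral is real-valued, so we record its real part. -/
def Jd (d : ℕ) (u : Ed d) : ℝ :=
  (∫ x in Metric.closedBall (0 : Ed d) 1, Complex.exp (-Complex.I * (⟪u, x⟫ : ℝ))).re

/-- `convIter d g k` is the `(k+1)`-fold convolution `g ∗ ⋯ ∗ g`. -/
def convIter (d : ℕ) (g : Ed d → ℝ) : ℕ → Ed d → ℝ
  | 0 => g
  | (k + 1) => (convIter d g k) ⋆[ContinuousLinearMap.lsmul ℝ ℝ] g

/-- The spectral density `s_q = (J_d²)^{∗q}` of the field with covariance `Δ^q`. -/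
def specDensityQ (d q : ℕ) : Ed d → ℝ := convIter d (fun u => Jd d u ^ 2) (q - 1)

/-!
Take `φ = F / s_q`, where `F = G₁ ∗ G₂ ∗ ⋯ ∗ G₂` with `q - 1` factors `G₂` and `Gᵢ = J_d · κᵢ` for
Schwartz functions `κᵢ`. The Cauchy–Schwarz inequality, applied at each convolution, bounds `|F|²`
by `s_q · P` with `P = |κ₁|² ∗ |κ₂|² ∗ ⋯ ∗ |κ₂|²` integrable, so `∫ |φ|² s_q ≤ ∫ P < ∞`; here
`J_d²` is integrable by Plancherel. The transform of `F` is `Ĝ₁ · Ĝ₂^(q-1)`, and `Ĝᵢ` is the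
correlation of `1_{B(0,1)}` with the bump `κ̂ᵢ`. Centring the bumps, of radius `δ`, at `±(1 - δ)e`
for a unit vector `e` makes `F̂(0) ≠ 0` and confines `F̂` to the lens
`B((1 - δ)e, 1 + δ) ∩ B(-(1 - δ)e, 1 + δ)`, which lies in `B(0, ε)` once `4δ ≤ ε²`. By the
multiplication formula `∫ ĥ F = ∫ h F̂`, which vanishes for `h` supported off `B(0, ε)` and is
positive when `h` is the conjugate of `F̂`. Since `h ↦ ∫ ĥ F` is continuous in the norm of `ĥ` in
`L²(s_q)`, that conjugate is not approximated by functions supported off `B(0, ε)`.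
-/

section CauchySchwarz

variable {α E : Type*} [MeasurableSpace α] {μ : Measure α} [NormedAddCommGroup E] [NormedSpace ℝ E]

lemma memLp_two_sqrt {A : α → ℝ} (hA : Integrable A μ) (hA0 : 0 ≤ᵐ[μ] A) :
    MemLp (fun x => √(A x)) 2 μ := by
  rw [memLp_two_iff_integrable_sq
    (Real.continuous_sqrt.comp_aestronglyMeasurable hA.aestronglyMeasurable)]
  exact hA.congr (hA0.mono fun x hx => (Real.sq_sqrt hx).symm)

lemma integral_sqrt_mul_sqrt_le {A B : α → ℝ} (hA : Integrable A μ) (hB : Integrable B μ)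
    (hA0 : 0 ≤ᵐ[μ] A) (hB0 : 0 ≤ᵐ[μ] B) :
    ∫ x, √(A x) * √(B x) ∂μ ≤ √(∫ x, A x ∂μ) * √(∫ x, B x ∂μ) := by
  have integral_sq_sqrt {C : α → ℝ} (hC0 : 0 ≤ᵐ[μ] C) :
      ∫ x, √(C x) ^ (2 : ℝ) ∂μ = ∫ x, C x ∂μ :=
    integral_congr_ae (hC0.mono fun x hx => by simp only [Real.rpow_two, Real.sq_sqrt hx])
  have holder := integral_mul_le_Lp_mul_Lq_of_nonneg (μ := μ) Real.HolderConjugate.two_two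
    (.of_forall fun x => (A x).sqrt_nonneg) (.of_forall fun x => (B x).sqrt_nonneg)
    (by simpa using memLp_two_sqrt hA hA0) (by simpa using memLp_two_sqrt hB hB0)
  simpa only [integral_sq_sqrt hA0, integral_sq_sqrt hB0, ← Real.sqrt_eq_rpow] using holder

lemma norm_integral_sq_le_of_norm_sq_le_mul {H : α → E} {A B : α → ℝ} (hA : Integrable A μ)
    (hB : Integrable B μ) (hA0 : 0 ≤ᵐ[μ] A) (hB0 : 0 ≤ᵐ[μ] B)
    (h : ∀ᵐ x ∂μ, ‖H x‖ ^ 2 ≤ A x * B x) :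
    ‖∫ x, H x ∂μ‖ ^ 2 ≤ (∫ x, A x ∂μ) * ∫ x, B x ∂μ := by
  have norm_le : ‖∫ x, H x ∂μ‖ ≤ √(∫ x, A x ∂μ) * √(∫ x, B x ∂μ) := by
    refine (norm_integral_le_of_norm_le
      ((memLp_two_sqrt hA hA0).integrable_mul (memLp_two_sqrt hB hB0)) ?_).trans
      (integral_sqrt_mul_sqrt_le hA hB hA0 hB0)
    filter_upwards [hA0, h] with x hAx hx
    simpa only [Pi.mul_apply, ← Real.sqrt_mul hAx] using Real.le_sqrt_of_sq_le hx
  calc ‖∫ x, H x ∂μ‖ ^ 2 ≤ (√(∫ x, A x ∂μ) * √(∫ x, B x ∂μ)) ^ 2 := by gcongr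
    _ = (∫ x, A x ∂μ) * ∫ x, B x ∂μ := by
      rw [mul_pow, Real.sq_sqrt (integral_nonneg_of_ae hA0),
        Real.sq_sqrt (integral_nonneg_of_ae hB0)]

end CauchySchwarz

section BddContIntegrable

/-- Bounded continuous integrable functions. On a group these are closed under convolution, and
the convolution integral of two of them converges at every point. -/
structure IsBddContIntegrable {X E : Type*} [TopologicalSpace X] [MeasurableSpace X]
    [NormedAddCommGroup E] (f : X → E) (μ : Measure X := by volume_tac) : Prop where
  continuous : Continuous f
  integrable : Integrable f μ
  bounded : ∃ C : ℝ, ∀ x, ‖f x‖ ≤ C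

namespace IsBddContIntegrable

section Pointwise

variable {X 𝕜 E : Type*} [TopologicalSpace X] [SecondCountableTopology X] [MeasurableSpace X]
  [OpensMeasurableSpace X] {μ : Measure X} [NormedField 𝕜] [NormedAddCommGroup E] [NormedSpace 𝕜 E]
  {f : X → E}

lemma bdd_smul {φ : X → 𝕜} (hf : IsBddContIntegrable f μ) (hφ : Continuous φ)
    (hφ_bdd : ∃ C : ℝ, ∀ x, ‖φ x‖ ≤ C) : IsBddContIntegrable (fun x => φ x • f x) μ := by
  obtain ⟨C, hC⟩ := hφ_bdd
  obtain ⟨K, hK⟩ := hf.bounded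
  refine ⟨hφ.smul hf.continuous,
    hf.integrable.bdd_smul C hφ.aestronglyMeasurable (.of_forall hC), C * K, fun x => ?_⟩
  rw [norm_smul]
  exact mul_le_mul (hC x) (hK x) (norm_nonneg _) ((norm_nonneg _).trans (hC x))

lemma norm_sq (hf : IsBddContIntegrable f μ) : IsBddContIntegrable (fun x => ‖f x‖ ^ 2) μ := by
  have hnorm : IsBddContIntegrable (fun x => ‖f x‖) μ :=
    ⟨hf.continuous.norm, hf.integrable.norm, by simpa only [norm_norm] using hf.bounded⟩
  simpa only [sq, smul_eq_mul] using hnorm.bdd_smul hnorm.continuous hnorm.bounded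

end Pointwise

variable {G 𝕜 E E' W : Type*} [AddGroup G] [TopologicalSpace G] [IsTopologicalAddGroup G]
  [SecondCountableTopology G] [MeasurableSpace G] [BorelSpace G] {μ : Measure G}
  [NontriviallyNormedField 𝕜] [NormedAddCommGroup E] [NormedSpace 𝕜 E] [NormedAddCommGroup E']
  [NormedSpace 𝕜 E'] [NormedAddCommGroup W] [NormedSpace 𝕜 W] {f : G → E} {g : G → E'}

lemma convolutionExistsAt (hf : IsBddContIntegrable f μ) (hg : IsBddContIntegrable g μ)
    (L : E →L[𝕜] E' →L[𝕜] W) (x : G) : ConvolutionExistsAt f g x L μ := by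
  obtain ⟨C, hC⟩ := hg.bounded
  exact BddAbove.convolutionExistsAt' L ⟨C, by rintro _ ⟨y, -, rfl⟩; exact hC y⟩ .univ
    (Set.subset_univ _) hf.integrable.integrableOn hg.continuous.aestronglyMeasurable

lemma convolution [NormedSpace ℝ W] [SFinite μ] [μ.IsAddRightInvariant]
    (hf : IsBddContIntegrable f μ) (hg : IsBddContIntegrable g μ) (L : E →L[𝕜] E' →L[𝕜] W) :
    IsBddContIntegrable (f ⋆[L, μ] g) μ := by
  obtain ⟨C, hC⟩ := hg.bounded
  have hg_bdd : BddAbove (Set.range fun x => ‖g x‖) := ⟨C, by rintro _ ⟨x, rfl⟩; exact hC x⟩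
  refine ⟨hg_bdd.continuous_convolution_right_of_integrable L hf.integrable hg.continuous,
    hf.integrable.integrable_convolution L hg.integrable, ∫ t, ‖L‖ * ‖f t‖ * C ∂μ, fun x => ?_⟩
  exact norm_integral_le_of_norm_le ((hf.integrable.norm.const_mul _).mul_const _)
    (.of_forall fun t => L.le_of_opNorm₂_le_of_le le_rfl le_rfl (hC _))

end IsBddContIntegrable

end BddContIntegrable

lemma convolution_nonneg {G : Type*} [AddGroup G] [MeasurableSpace G] {μ : Measure G}
    {f g : G → ℝ} (hf : ∀ x, 0 ≤ f x) (hg : ∀ x, 0 ≤ g x) (x : G) :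
    0 ≤ (f ⋆[ContinuousLinearMap.lsmul ℝ ℝ, μ] g) x :=
  integral_nonneg fun t => mul_nonneg (hf t) (hg (x - t))

section FiniteEnergy

/-- `F` has finite energy relative to the weight `s`: a pointwise form of `∫ ‖F‖² / s < ∞`, i.e. of
`F / s ∈ L²(s)`, in which `‖F‖² / s` is dominated by a bounded continuous integrable `P`. The
inequality is stated without division, so that `F` vanishes wherever `s` does. -/
structure HasFiniteEnergy {X E : Type*} [TopologicalSpace X] [MeasurableSpace X]
    [NormedAddCommGroup E] (F : X → E) (s : X → ℝ) (μ : Measure X := by volume_tac) : Prop where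
  isBddContIntegrable : IsBddContIntegrable F μ
  exists_density : ∃ P : X → ℝ, IsBddContIntegrable P μ ∧ (∀ x, 0 ≤ P x) ∧
    ∀ x, ‖F x‖ ^ 2 ≤ s x * P x

namespace HasFiniteEnergy

section Pointwise

variable {X 𝕜 E : Type*} [TopologicalSpace X] [MeasurableSpace X] {μ : Measure X} [NormedField 𝕜]
  [NormedAddCommGroup E] [NormedSpace 𝕜 E]

lemma eq_zero {F : X → E} {s : X → ℝ} (hF : HasFiniteEnergy F s μ) {x : X} (hx : s x = 0) :
    F x = 0 := by
  obtain ⟨P, -, -, hFP⟩ := hF.exists_density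
  have norm_sq_le : ‖F x‖ ^ 2 ≤ 0 := by simpa only [hx, zero_mul] using hFP x
  exact norm_eq_zero.1 (sq_eq_zero_iff.1 (norm_sq_le.antisymm (sq_nonneg _)))

lemma smul_of_bdd [SecondCountableTopology X] [OpensMeasurableSpace X] {κ : X → E} {φ : X → 𝕜}
    (hκ : IsBddContIntegrable κ μ) (hφ : Continuous φ) (hφ_bdd : ∃ C : ℝ, ∀ x, ‖φ x‖ ≤ C) :
    HasFiniteEnergy (fun x => φ x • κ x) (fun x => ‖φ x‖ ^ 2) μ :=
  ⟨hκ.bdd_smul hφ hφ_bdd, _, hκ.norm_sq, fun _ => sq_nonneg _,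
    fun x => by rw [norm_smul, mul_pow]⟩

end Pointwise

-- By Cauchy–Schwarz, `|F₁ ∗ F₂|² ≤ (√(s₁P₁) ∗ √(s₂P₂))² ≤ (s₁ ∗ s₂) (P₁ ∗ P₂)`.
lemma convolution {G 𝕜 E E' W : Type*} [AddGroup G] [TopologicalSpace G] [IsTopologicalAddGroup G]
    [SecondCountableTopology G] [MeasurableSpace G] [BorelSpace G] {μ : Measure G} [SFinite μ]
    [μ.IsAddRightInvariant] [NontriviallyNormedField 𝕜] [NormedAddCommGroup E] [NormedSpace 𝕜 E]
    [NormedAddCommGroup E'] [NormedSpace 𝕜 E'] [NormedAddCommGroup W] [NormedSpace 𝕜 W]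
    [NormedSpace ℝ W] {F₁ : G → E} {F₂ : G → E'} {s₁ s₂ : G → ℝ} (hF₁ : HasFiniteEnergy F₁ s₁ μ)
    (hF₂ : HasFiniteEnergy F₂ s₂ μ) (hs₁ : IsBddContIntegrable s₁ μ)
    (hs₂ : IsBddContIntegrable s₂ μ) (hs₁_nonneg : ∀ x, 0 ≤ s₁ x) (hs₂_nonneg : ∀ x, 0 ≤ s₂ x)
    (L : E →L[𝕜] E' →L[𝕜] W) :
    HasFiniteEnergy (F₁ ⋆[L, μ] F₂) (s₁ ⋆[ContinuousLinearMap.lsmul ℝ ℝ, μ] s₂) μ := by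
  obtain ⟨P₁, hP₁, hP₁_nonneg, hFP₁⟩ := hF₁.exists_density
  obtain ⟨P₂, hP₂, hP₂_nonneg, hFP₂⟩ := hF₂.exists_density
  refine ⟨hF₁.isBddContIntegrable.convolution hF₂.isBddContIntegrable L,
    fun x => ‖L‖ ^ 2 • (P₁ ⋆[ContinuousLinearMap.lsmul ℝ ℝ, μ] P₂) x,
    (hP₁.convolution hP₂ _).bdd_smul continuous_const ⟨_, fun _ => le_rfl⟩,
    fun x => mul_nonneg (sq_nonneg _) (convolution_nonneg hP₁_nonneg hP₂_nonneg x), fun x => ?_⟩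
  have hs_int : Integrable (fun t => s₁ t * s₂ (x - t)) μ :=
    hs₁.convolutionExistsAt hs₂ (ContinuousLinearMap.lsmul ℝ ℝ) x
  have hP_int : Integrable (fun t => ‖L‖ ^ 2 * (P₁ t * P₂ (x - t))) μ :=
    (hP₁.convolutionExistsAt hP₂ (ContinuousLinearMap.lsmul ℝ ℝ) x).const_mul _
  refine (norm_integral_sq_le_of_norm_sq_le_mul hs_int hP_int
    (.of_forall fun t => mul_nonneg (hs₁_nonneg _) (hs₂_nonneg _))
    (.of_forall fun t => mul_nonneg (sq_nonneg _) (mul_nonneg (hP₁_nonneg _) (hP₂_nonneg _)))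
    (.of_forall fun t => ?_)).trans_eq (congrArg _ (integral_const_mul _ _))
  calc ‖L (F₁ t) (F₂ (x - t))‖ ^ 2
      ≤ (‖L‖ * ‖F₁ t‖ * ‖F₂ (x - t)‖) ^ 2 := by gcongr; exact L.le_opNorm₂ _ _
    _ = ‖L‖ ^ 2 * (‖F₁ t‖ ^ 2 * ‖F₂ (x - t)‖ ^ 2) := by ring
    _ ≤ ‖L‖ ^ 2 * ((s₁ t * P₁ t) * (s₂ (x - t) * P₂ (x - t))) := by
      gcongr
      exacts [mul_nonneg (hs₁_nonneg t) (hP₁_nonneg t), hFP₁ t, hFP₂ (x - t)]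
    _ = s₁ t * s₂ (x - t) * (‖L‖ ^ 2 * (P₁ t * P₂ (x - t))) := by ring

section Complex

variable {X : Type*} [TopologicalSpace X] [MeasurableSpace X] {μ : Measure X} {F : X → ℂ}
  {s : X → ℝ}

lemma div_mul_cancel (hF : HasFiniteEnergy F s μ) (x : X) : F x / (s x : ℂ) * (s x : ℂ) = F x :=
  div_mul_cancel_of_imp fun hx => hF.eq_zero (Complex.ofReal_eq_zero.1 hx)

lemma lintegral_div_lt_top (hF : HasFiniteEnergy F s μ) (hs_nonneg : ∀ x, 0 ≤ s x) :
    ∫⁻ x, (‖F x / (s x : ℂ)‖₊ : ℝ≥0∞) ^ 2 * ENNReal.ofReal (s x) ∂μ < ⊤ := by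
  obtain ⟨P, hP, hP_nonneg, hFP⟩ := hF.exists_density
  refine (lintegral_mono fun x => ?_).trans_lt hP.integrable.lintegral_lt_top
  have norm_sq_div : ‖F x / (s x : ℂ)‖ ^ 2 * s x = ‖F x‖ ^ 2 / s x := by
    rw [norm_div, Complex.norm_of_nonneg (hs_nonneg x), div_pow]
    rcases eq_or_ne (s x) 0 with hx | hx
    · simp [hx]
    · field_simp
  rw [← ENNReal.coe_pow, ← ENNReal.ofReal_coe_nnreal, ← ENNReal.ofReal_mul (by positivity)]
  refine ENNReal.ofReal_le_ofReal ?_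
  rw [NNReal.coe_pow, coe_nnnorm, norm_sq_div]
  exact div_le_of_le_mul₀ (hs_nonneg x) (hP_nonneg x) ((hFP x).trans_eq (mul_comm _ _))

lemma lintegral_div_pos [OpensMeasurableSpace X] [μ.IsOpenPosMeasure] (hF : HasFiniteEnergy F s μ)
    (hs : Measurable s) (hs_nonneg : ∀ x, 0 ≤ s x) {x₀ : X} (hx₀ : F x₀ ≠ 0) :
    0 < ∫⁻ x, (‖F x / (s x : ℂ)‖₊ : ℝ≥0∞) ^ 2 * ENNReal.ofReal (s x) ∂μ := by
  have hF_cont := hF.isBddContIntegrable.continuous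
  have hφ : Measurable fun x => F x / (s x : ℂ) := hF_cont.measurable.div hs.complex_ofReal
  have energy_meas : Measurable fun x =>
      (‖F x / (s x : ℂ)‖₊ : ℝ≥0∞) ^ 2 * ENNReal.ofReal (s x) :=
    (hφ.nnnorm.coe_nnreal_ennreal.pow_const 2).mul hs.ennreal_ofReal
  rw [lintegral_pos_iff_support energy_meas]
  refine (hF_cont.isOpen_support.measure_pos μ ⟨x₀, hx₀⟩).trans_le (measure_mono fun x hx => ?_)
  have hsx : s x ≠ 0 := fun h => hx (hF.eq_zero h)
  have hsx_pos : 0 < s x := (hs_nonneg x).lt_of_ne' hsx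
  simpa [hsx, hsx_pos] using hx

end Complex

end HasFiniteEnergy

end FiniteEnergy

section Schwartz

open FourierTransform SchwartzMap

variable {V E : Type*} [NormedAddCommGroup V] [InnerProductSpace ℝ V] [FiniteDimensional ℝ V]
  [MeasurableSpace V] [BorelSpace V] [NormedAddCommGroup E]

lemma IsBddContIntegrable.of_schwartzMap [NormedSpace ℝ E] (κ : 𝓢(V, E)) :
    IsBddContIntegrable κ := by
  obtain ⟨C, -, hC⟩ := κ.decay 0 0
  exact ⟨κ.continuous, κ.integrable, C, by simpa using hC⟩

lemma ae_eq_of_integral_schwartz_smul_eq [NormedSpace ℂ E] [CompleteSpace E] {f g : V → E}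
    (hf : LocallyIntegrable f) (hg : LocallyIntegrable g)
    (h : ∀ ψ : 𝓢(V, ℂ), ∫ x, ψ x • f x = ∫ x, ψ x • g x) : f =ᵐ[volume] g := by
  refine ae_eq_of_integral_contDiff_smul_eq hf hg fun b hb hb_supp => ?_
  have hb_supp' : HasCompactSupport fun x => (b x : ℂ) :=
    hb_supp.comp_left (g := Complex.ofReal) Complex.ofReal_zero
  exact h (hb_supp'.toSchwartzMap (Complex.ofRealCLM.contDiff.comp hb))

lemma integral_fourier_smul_comm [NormedSpace ℂ E] [CompleteSpace E] {f : V → ℂ} {g : V → E}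
    (hf : Integrable f) (hg : Integrable g) : ∫ x, 𝓕 f x • g x = ∫ x, f x • 𝓕 g x := by
  have flip_eq := VectorFourier.integral_fourierIntegral_smul_eq_flip (L := innerₗ V)
    Real.continuous_fourierChar continuous_inner hf hg
  rwa [flip_innerₗ] at flip_eq

lemma memLp_two_fourier [InnerProductSpace ℂ E] [CompleteSpace E] {f : V → E}
    (hf : Integrable f) (hf2 : MemLp f 2) : MemLp (𝓕 f) 2 := by
  have hcont : Continuous (𝓕 f) := VectorFourier.fourierIntegral_continuous
    Real.continuous_fourierChar continuous_inner hf
  let G : Lp E 2 (volume : Measure V) := 𝓕 (hf2.toLp f)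
  have integral_eq (ψ : 𝓢(V, ℂ)) : ∫ x, ψ x • G x = ∫ x, ψ x • 𝓕 f x := by
    have hψ := congrArg (fun T => T ψ) (Lp.fourier_toTemperedDistribution_eq (hf2.toLp f))
    simp only [TemperedDistribution.fourier_apply, Lp.toTemperedDistribution_apply] at hψ
    calc ∫ x, ψ x • G x = ∫ x, 𝓕 ψ x • hf2.toLp f x := hψ.symm
      _ = ∫ x, 𝓕 (ψ : V → ℂ) x • f x := by
        refine integral_congr_ae (hf2.coeFn_toLp.mono fun x hx => ?_)
        simp only [hx, SchwartzMap.fourier_coe]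
      _ = ∫ x, ψ x • 𝓕 f x := integral_fourier_smul_comm ψ.integrable hf
  have hae : G =ᵐ[volume] 𝓕 f := ae_eq_of_integral_schwartz_smul_eq
    ((Lp.memLp _).locallyIntegrable one_le_two) hcont.locallyIntegrable integral_eq
  exact (memLp_congr_ae hae).1 (Lp.memLp _)

end Schwartz

section FT

open FourierTransform SchwartzMap

variable {d : ℕ} {f g : Ed d → ℂ}

lemma FT_eq_fourierIntegral (f : Ed d → ℂ) :
    FT f = VectorFourier.fourierIntegral Real.probChar volume (innerₗ (Ed d)) f := by
  ext u
  rw [VectorFourier.fourierIntegral_probChar, FT]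
  congr! 3 with x
  rw [innerₗ_apply_apply, real_inner_comm, neg_mul_comm, mul_comm]

lemma FT_eq_fourier (f : Ed d → ℂ) (u : Ed d) : FT f u = 𝓕 f ((2 * Real.pi)⁻¹ • u) := by
  rw [Real.fourier_eq', FT]
  congr! 3 with x
  rw [inner_smul_right, real_inner_comm]
  push_cast
  field_simp

lemma continuous_FT (hf : Integrable f) : Continuous (FT f) := by
  rw [FT_eq_fourierIntegral]
  exact VectorFourier.fourierIntegral_continuous Real.continuous_probChar continuous_inner hf

lemma norm_FT_le (f : Ed d → ℂ) (u : Ed d) : ‖FT f u‖ ≤ ∫ x, ‖f x‖ := by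
  rw [FT_eq_fourierIntegral]
  exact VectorFourier.norm_fourierIntegral_le_integral_norm _ _ _ _ _

lemma integral_FT_mul_comm (hf : Integrable f) (hg : Integrable g) :
    ∫ u, FT f u * g u = ∫ x, f x * FT g x := by
  simpa only [FT_eq_fourierIntegral, flip_innerₗ, smul_eq_mul] using
    VectorFourier.integral_fourierIntegral_smul_eq_flip (L := innerₗ (Ed d))
      Real.continuous_probChar continuous_inner hf hg

lemma FT_convolution (hf : Integrable f) (hg : Integrable g) (u : Ed d) :
    FT (f ⋆[ContinuousLinearMap.mul ℂ ℂ] g) u = FT f u * FT g u := by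
  simp only [FT_eq_fourier, Real.fourier_mul_convolution_eq hf hg]

lemma FT_FT_mul {κ : Ed d → ℂ} (hf : Integrable f) (hκ : Integrable κ) (x : Ed d) :
    FT (fun u => FT f u * κ u) x = ∫ y, f y * FT κ (x + y) := by
  have hmod : Integrable fun u => Complex.exp (-Complex.I * (⟪x, u⟫ : ℝ)) * κ u := by
    refine hκ.bdd_mul (c := 1) (by fun_prop) (.of_forall fun u => ?_)
    simp [Complex.norm_exp]
  have FT_modulation (y : Ed d) :
      FT (fun u => Complex.exp (-Complex.I * (⟪x, u⟫ : ℝ)) * κ u) y = FT κ (x + y) := by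
    simp only [FT, ← mul_assoc, ← Complex.exp_add, inner_add_left]
    congr! 4 with u
    push_cast
    ring
  calc FT (fun u => FT f u * κ u) x
      = ∫ u, FT f u * (Complex.exp (-Complex.I * (⟪x, u⟫ : ℝ)) * κ u) := by
        simp only [FT, mul_left_comm]
    _ = ∫ y, f y * FT κ (x + y) := by
        simp only [integral_FT_mul_comm hf hmod, FT_modulation]

lemma conj_FT (f : Ed d → ℂ) (u : Ed d) :
    starRingEnd ℂ (FT f u) = FT (fun x => starRingEnd ℂ (f (-x))) u := by
  rw [FT, FT, ← integral_conj, ← integral_neg_eq_self]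
  simp [← Complex.exp_conj]

lemma isBddContIntegrable_norm_sq_FT (hf : Integrable f) (hf2 : MemLp f 2) :
    IsBddContIntegrable fun u => ‖FT f u‖ ^ 2 := by
  have integrable_norm_sq_fourier : Integrable fun u => ‖𝓕 f u‖ ^ 2 :=
    (memLp_two_fourier hf hf2).integrable_norm_pow two_ne_zero
  refine ⟨(continuous_FT hf).norm.pow 2, ?_, (∫ x, ‖f x‖) ^ 2, fun u => ?_⟩
  · simpa only [FT_eq_fourier] using
      integrable_norm_sq_fourier.comp_smul (R := (2 * Real.pi)⁻¹) (by positivity)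
  · rw [norm_pow, norm_norm]
    gcongr
    exact norm_FT_le f u

lemma exists_schwartz_FT_eq (ψ : 𝓢(Ed d, ℂ)) : ∃ κ : 𝓢(Ed d, ℂ), FT κ = ψ := by
  have hπ : 2 * Real.pi ≠ 0 := by positivity
  let ψ' : 𝓢(Ed d, ℂ) := compCLMOfContinuousLinearEquiv ℂ
    (ContinuousLinearEquiv.smulLeft (Units.mk0 (2 * Real.pi) hπ)) ψ
  refine ⟨𝓕⁻ ψ', ?_⟩
  ext u
  rw [FT_eq_fourier, ← SchwartzMap.fourier_coe, FourierTransform.fourier_fourierInv_eq]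
  change ψ ((2 * Real.pi) • (2 * Real.pi)⁻¹ • u) = ψ u
  rw [smul_inv_smul₀ hπ]

end FT
section IndicatorTransform

lemma memLp_indicator_one {X : Type*} [MeasurableSpace X] {μ : Measure X} {K : Set X}
    (hK : MeasurableSet K) (hK_fin : μ K ≠ ⊤) (p : ℝ≥0∞) : MemLp (K.indicator (1 : X → ℂ)) p μ :=
  memLp_indicator_const p hK 1 (.inr hK_fin)

lemma integrable_indicator_one {X : Type*} [MeasurableSpace X] {μ : Measure X} {K : Set X}
    (hK : MeasurableSet K) (hK_fin : μ K ≠ ⊤) : Integrable (K.indicator (1 : X → ℂ)) μ :=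
  memLp_one_iff_integrable.1 (memLp_indicator_one hK hK_fin 1)

lemma ofReal_Jd (d : ℕ) (u : Ed d) :
    (Jd d u : ℂ) = FT ((Metric.closedBall 0 1).indicator 1) u := by
  classical
  have integral_eq : ∫ x in Metric.closedBall (0 : Ed d) 1, Complex.exp (-Complex.I * (⟪u, x⟫ : ℝ))
      = FT ((Metric.closedBall 0 1).indicator 1) u := by
    rw [FT, ← integral_indicator Metric.isClosed_closedBall.measurableSet]
    simp only [Set.indicator_apply, Pi.one_apply, mul_ite, mul_one, mul_zero]
  rw [Jd, integral_eq, ← Complex.conj_eq_iff_re, conj_FT]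
  congr! with x
  simp [Set.indicator_apply]

lemma specDensityQ_eq_convIter_norm_sq_FT (d q : ℕ) :
    specDensityQ d q =
      convIter d (fun u => ‖FT ((Metric.closedBall 0 1).indicator 1) u‖ ^ 2) (q - 1) := by
  simp only [specDensityQ, ← ofReal_Jd, Complex.norm_real, Real.norm_eq_abs, sq_abs]

end IndicatorTransform

section ConvIter

variable {d : ℕ} {g : Ed d → ℝ}

lemma convIter_nonneg (hg : ∀ x, 0 ≤ g x) (k : ℕ) (x : Ed d) : 0 ≤ convIter d g k x := by
  induction k generalizing x with
  | zero => exact hg x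
  | succ k ih => exact convolution_nonneg ih hg x

lemma IsBddContIntegrable.convIter (hg : IsBddContIntegrable g) (k : ℕ) :
    IsBddContIntegrable (convIter d g k) := by
  induction k with
  | zero => exact hg
  | succ k ih => exact ih.convolution hg _

lemma HasFiniteEnergy.exists_convIter {G₁ G₂ : Ed d → ℂ} (hG₁ : HasFiniteEnergy G₁ g)
    (hG₂ : HasFiniteEnergy G₂ g) (hg : IsBddContIntegrable g) (hg_nonneg : ∀ x, 0 ≤ g x) (k : ℕ) :
    ∃ F : Ed d → ℂ, HasFiniteEnergy F (convIter d g k) ∧ ∀ x, FT F x = FT G₁ x * FT G₂ x ^ k := by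
  induction k with
  | zero => exact ⟨G₁, hG₁, fun x => by rw [pow_zero, mul_one]⟩
  | succ k ih =>
    obtain ⟨F, hF, hFT⟩ := ih
    refine ⟨F ⋆[ContinuousLinearMap.mul ℂ ℂ] G₂,
      hF.convolution hG₂ (hg.convIter k) hg (convIter_nonneg hg_nonneg k) hg_nonneg _, fun x => ?_⟩
    rw [FT_convolution hF.isBddContIntegrable.integrable hG₂.isBddContIntegrable.integrable, hFT,
      pow_succ, mul_assoc]

end ConvIter

section SmearedIndicator

open scoped Pointwise SchwartzMap

variable {d : ℕ} {K : Set (Ed d)}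

lemma FT_FT_indicator_mul (hK : MeasurableSet K) (hK_fin : volume K ≠ ⊤) {κ : Ed d → ℂ}
    (hκ : Integrable κ) (x : Ed d) :
    FT (fun u => FT (K.indicator 1) u * κ u) x = ∫ y in K, FT κ (x + y) := by
  classical
  rw [FT_FT_mul (integrable_indicator_one hK hK_fin) hκ, ← integral_indicator hK]
  simp [Set.indicator_apply]

lemma exists_schwartz_FT_eq_contDiffBump {a : Ed d} (b : ContDiffBump a) :
    ∃ κ : 𝓢(Ed d, ℂ), ∀ x, FT κ x = (b x : ℂ) := by
  have hb_supp : HasCompactSupport fun x => (b x : ℂ) :=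
    b.hasCompactSupport.comp_left (g := Complex.ofReal) Complex.ofReal_zero
  obtain ⟨κ, hκ⟩ := exists_schwartz_FT_eq
    (hb_supp.toSchwartzMap (Complex.ofRealCLM.contDiff.comp b.contDiff))
  exact ⟨κ, congrFun hκ⟩

-- `F̂` is the correlation of `1_K` with a smooth bump at `a`: take `F = 1̂_K · κ`, `κ̂` the bump.
lemma exists_hasFiniteEnergy_norm_sq_FT_indicator (hK : MeasurableSet K) (hK_fin : volume K ≠ ⊤)
    {a : Ed d} (ha : a ∈ interior K) {δ : ℝ} (hδ : 0 < δ) :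
    ∃ F : Ed d → ℂ, HasFiniteEnergy F (fun u => ‖FT (K.indicator 1) u‖ ^ 2) ∧ FT F 0 ≠ 0 ∧
      Function.support (FT F) ⊆ Metric.ball a δ - K := by
  let b : ContDiffBump a := ⟨δ / 2, δ, half_pos hδ, half_lt_self hδ⟩
  obtain ⟨κ, hκ⟩ := exists_schwartz_FT_eq_contDiffBump b
  have FT_eq (x : Ed d) :
      FT (fun u => FT (K.indicator 1) u * κ u) x = ((∫ y in K, b (x + y) : ℝ) : ℂ) := by
    simp only [FT_FT_indicator_mul hK hK_fin κ.integrable, hκ, integral_complex_ofReal]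
  have h1K := integrable_indicator_one hK hK_fin
  refine ⟨fun u => FT (K.indicator 1) u * κ u,
    .smul_of_bdd (.of_schwartzMap κ) (continuous_FT h1K) ⟨_, norm_FT_le _⟩, ?_, fun x hx => ?_⟩
  · have interior_subset : interior K ∩ Function.support b ⊆ Function.support b ∩ K :=
      fun y hy => ⟨hy.2, interior_subset hy.1⟩
    have integral_pos : 0 < ∫ y in K, b y := by
      rw [setIntegral_pos_iff_support_of_nonneg_ae (.of_forall fun y => b.nonneg)
        (b.continuous.integrable_of_hasCompactSupport b.hasCompactSupport).integrableOn]
      refine ((isOpen_interior.inter b.continuous.isOpen_support).measure_pos volume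
        ⟨a, ha, ?_⟩).trans_le (measure_mono interior_subset)
      exact (b.pos_of_mem_ball (Metric.mem_ball_self hδ)).ne'
    simpa only [FT_eq, zero_add, ne_eq, Complex.ofReal_eq_zero] using integral_pos.ne'
  · obtain ⟨y, hyK, hby⟩ : ∃ y ∈ K, b (x + y) ≠ 0 := by
      by_contra! hb
      exact hx (by rw [FT_eq, setIntegral_eq_zero_of_forall_eq_zero hb, Complex.ofReal_zero])
    exact ⟨x + y, b.support_eq ▸ hby, y, hyK, add_sub_cancel_right x y⟩

lemma exists_hasFiniteEnergy_convIter (hK : MeasurableSet K) (hK_fin : volume K ≠ ⊤)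
    {a b : Ed d} (ha : a ∈ interior K) (hb : b ∈ interior K) {δ : ℝ} (hδ : 0 < δ) {k : ℕ}
    (hk : k ≠ 0) :
    ∃ F : Ed d → ℂ, HasFiniteEnergy F (convIter d (fun u => ‖FT (K.indicator 1) u‖ ^ 2) k) ∧
      FT F 0 ≠ 0 ∧
      Function.support (FT F) ⊆ (Metric.ball a δ - K) ∩ (Metric.ball b δ - K) := by
  obtain ⟨G₁, hG₁, hG₁_ne, hG₁_supp⟩ :=
    exists_hasFiniteEnergy_norm_sq_FT_indicator hK hK_fin ha hδ
  obtain ⟨G₂, hG₂, hG₂_ne, hG₂_supp⟩ :=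
    exists_hasFiniteEnergy_norm_sq_FT_indicator hK hK_fin hb hδ
  have h1K := isBddContIntegrable_norm_sq_FT
    (integrable_indicator_one hK hK_fin) (memLp_indicator_one hK hK_fin 2)
  obtain ⟨F, hF, hFT⟩ := hG₁.exists_convIter hG₂ h1K (fun u => sq_nonneg _) k
  refine ⟨F, hF, hFT 0 ▸ mul_ne_zero hG₁_ne (pow_ne_zero k hG₂_ne), fun x hx => ?_⟩
  rw [Function.mem_support, hFT, mul_ne_zero_iff, pow_ne_zero_iff hk] at hx
  exact ⟨hG₁_supp hx.1, hG₂_supp hx.2⟩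

end SmearedIndicator

section Lens

variable {E : Type*} [NormedAddCommGroup E] [InnerProductSpace ℝ E]

lemma ball_inter_ball_neg_subset_ball {a : E} {r ε : ℝ} (hε : 0 ≤ ε) (h : r ^ 2 ≤ ‖a‖ ^ 2 + ε ^ 2) :
    Metric.ball a r ∩ Metric.ball (-a) r ⊆ Metric.ball 0 ε := by
  rintro x ⟨hx, hx_neg⟩
  rw [mem_ball_iff_norm] at hx hx_neg
  rw [sub_neg_eq_add] at hx_neg
  rw [mem_ball_zero_iff]
  have parallelogram := parallelogram_law_with_norm ℝ x a
  have norm_add_sq_lt : ‖x + a‖ ^ 2 < r ^ 2 := by gcongr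
  have norm_sub_sq_lt : ‖x - a‖ ^ 2 < r ^ 2 := by gcongr
  exact lt_of_pow_lt_pow_left₀ 2 hε (by linarith)

lemma exists_ball_inter_ball_neg_subset_ball [Nontrivial E] {ε : ℝ} (hε : 0 < ε) :
    ∃ a : E, ∃ δ > 0, ‖a‖ < 1 ∧
      Metric.ball a (δ + 1) ∩ Metric.ball (-a) (δ + 1) ⊆ Metric.ball 0 ε := by
  obtain ⟨δ, hδ, hδ_le, hδ_le_sq⟩ : ∃ δ > 0, δ ≤ 1 ∧ 4 * δ ≤ ε ^ 2 :=
    ⟨min 1 (ε ^ 2 / 4), by positivity, min_le_left _ _, by linarith [min_le_right 1 (ε ^ 2 / 4)]⟩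
  obtain ⟨a, ha⟩ := exists_norm_eq E (sub_nonneg.2 hδ_le)
  exact ⟨a, δ, hδ, by linarith, ball_inter_ball_neg_subset_ball hε.le (by rw [ha]; linarith)⟩

end Lens
section Rigidity

variable {d : ℕ} {A : Set (Ed d)} {f h F : Ed d → ℂ} {s : Ed d → ℝ}

lemma IsCBS.integrable (hf : IsCBS A f) : Integrable f := by
  obtain ⟨hf_meas, ⟨C, hC⟩, hf_supp, -⟩ := hf
  obtain ⟨R, hR⟩ := hf_supp.subset_closedBall 0
  rw [← integrableOn_iff_integrable_of_support_subset hR]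
  exact Measure.integrableOn_of_bounded measure_closedBall_lt_top.ne hf_meas.aestronglyMeasurable
    (.of_forall hC)

lemma isCBS_conj_FT (hA : Bornology.IsBounded A) (hF : Integrable F)
    (hF_supp : Function.support (FT F) ⊆ A) : IsCBS A fun x => starRingEnd ℂ (FT F x) := by
  have support_subset : Function.support (fun x => starRingEnd ℂ (FT F x)) ⊆ A :=
    fun x hx => hF_supp fun hFx => hx (by simp only [hFx, map_zero])
  refine ⟨(Complex.continuous_conj.comp (continuous_FT hF)).measurable, ⟨∫ x, ‖F x‖, fun x => ?_⟩,
    hA.subset support_subset, support_subset⟩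
  simpa only [RCLike.norm_conj] using norm_FT_le F x

lemma integral_FT_mul_eq_zero (hh : IsCBS Aᶜ h) (hF : Integrable F)
    (hF_supp : Function.support (FT F) ⊆ A) : ∫ u, FT h u * F u = 0 := by
  rw [integral_FT_mul_comm hh.integrable hF]
  refine integral_eq_zero_of_ae (.of_forall fun x => ?_)
  by_cases hx : x ∈ A
  · exact mul_eq_zero_of_left (Function.notMem_support.1 fun hhx => hh.2.2.2 hhx hx) _
  · exact mul_eq_zero_of_right _ (Function.notMem_support.1 fun hFx => hx (hF_supp hFx))

lemma integral_FT_conj_FT_mul_ne_zero (hA : Bornology.IsBounded A) (hF : Integrable F)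
    (hF_supp : Function.support (FT F) ⊆ A) {x₀ : Ed d} (hx₀ : FT F x₀ ≠ 0) :
    ∫ u, FT (fun x => starRingEnd ℂ (FT F x)) u * F u ≠ 0 := by
  have support_subset : Function.support (fun x => ‖FT F x‖ ^ 2) ⊆ closure A := fun x hx =>
    subset_closure (hF_supp fun hFx => hx (by simp only [hFx, norm_zero, zero_pow two_ne_zero]))
  have norm_sq_pos : 0 < ∫ x, ‖FT F x‖ ^ 2 :=
    ((continuous_FT hF).norm.pow 2).integral_pos_of_hasCompactSupport_nonneg_nonzero
      (.of_support_subset_isCompact hA.isCompact_closure support_subset) (fun x => sq_nonneg _)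
      (pow_ne_zero 2 (norm_ne_zero_iff.2 hx₀))
  rw [integral_FT_mul_comm (isCBS_conj_FT hA hF hF_supp).integrable hF]
  simp only [Complex.conj_mul', ← Complex.ofReal_pow, integral_complex_ofReal]
  exact Complex.ofReal_ne_zero.2 norm_sq_pos.ne'

lemma integrable_mul_norm_sq_FT_sub (hs : Integrable s) (hf : Integrable f) (hh : Integrable h) :
    Integrable fun u => s u * ‖FT f u - FT h u‖ ^ 2 := by
  refine hs.mul_bdd (c := ((∫ x, ‖f x‖) + ∫ x, ‖h x‖) ^ 2)
    (((continuous_FT hf).sub (continuous_FT hh)).norm.pow 2).aestronglyMeasurable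
    (.of_forall fun u => ?_)
  rw [norm_pow, norm_norm]
  gcongr
  exact (norm_sub_le _ _).trans (add_le_add (norm_FT_le f u) (norm_FT_le h u))

lemma integrable_FT_mul (hf : Integrable f) (hF : Integrable F) :
    Integrable fun u => FT f u * F u :=
  hF.bdd_mul (continuous_FT hf).aestronglyMeasurable (.of_forall (norm_FT_le f))

lemma HasFiniteEnergy.exists_norm_integral_FT_sub_sq_le (hF : HasFiniteEnergy F s)
    (hs : IsBddContIntegrable s) (hs_nonneg : ∀ u, 0 ≤ s u) :
    ∃ M ≥ 0, ∀ f h : Ed d → ℂ, Integrable f → Integrable h →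
      ‖(∫ u, FT f u * F u) - ∫ u, FT h u * F u‖ ^ 2 ≤
        (∫ u, ‖FT f u - FT h u‖ ^ 2 ∂volume.withDensity fun u => ENNReal.ofReal (s u)) * M := by
  obtain ⟨P, hP, hP_nonneg, hFP⟩ := hF.exists_density
  have hF_int := hF.isBddContIntegrable.integrable
  refine ⟨∫ u, P u, integral_nonneg hP_nonneg, fun f h hf hh => ?_⟩
  rw [← integral_sub (integrable_FT_mul hf hF_int) (integrable_FT_mul hh hF_int),
    integral_withDensity_eq_integral_toReal_smul (by have := hs.continuous; fun_prop)
      (.of_forall fun u => ENNReal.ofReal_lt_top)]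
  simp only [ENNReal.toReal_ofReal (hs_nonneg _), smul_eq_mul]
  refine norm_integral_sq_le_of_norm_sq_le_mul (integrable_mul_norm_sq_FT_sub hs.integrable hf hh)
    hP.integrable (.of_forall fun u => mul_nonneg (hs_nonneg u) (sq_nonneg _))
    (.of_forall hP_nonneg) (.of_forall fun u => ?_)
  calc ‖FT f u * F u - FT h u * F u‖ ^ 2 = ‖FT f u - FT h u‖ ^ 2 * ‖F u‖ ^ 2 := by
        rw [← sub_mul, norm_mul, mul_pow]
    _ ≤ ‖FT f u - FT h u‖ ^ 2 * (s u * P u) := by gcongr; exact hFP u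
    _ = s u * ‖FT f u - FT h u‖ ^ 2 * P u := by ring

lemma LMR.integral_FT_mul_eq_zero (hL : LMR (volume.withDensity fun u => ENNReal.ofReal (s u)) A)
    (hF : HasFiniteEnergy F s) (hs : IsBddContIntegrable s) (hs_nonneg : ∀ u, 0 ≤ s u)
    (horth : ∀ h : Ed d → ℂ, IsCBS Aᶜ h → ∫ u, FT h u * F u = 0) (hf : IsCBS A f) :
    ∫ u, FT f u * F u = 0 := by
  obtain ⟨M, hM, norm_sq_le⟩ := hF.exists_norm_integral_FT_sub_sq_le hs hs_nonneg
  refine norm_eq_zero.1 (sq_eq_zero_iff.1 (le_antisymm ?_ (sq_nonneg _)))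
  refine le_of_forall_pos_le_add fun ε hε => ?_
  obtain ⟨h, hh, hfh⟩ := hL f hf (ε / (M + 1)) (by positivity)
  calc ‖∫ u, FT f u * F u‖ ^ 2 = ‖(∫ u, FT f u * F u) - ∫ u, FT h u * F u‖ ^ 2 := by
        rw [horth h hh, sub_zero]
    _ ≤ ε / (M + 1) * M := (norm_sq_le f h hf.integrable hh.integrable).trans (by gcongr)
    _ ≤ 0 + ε := by
        rw [zero_add, div_mul_eq_mul_div]
        exact div_le_of_le_mul₀ (by positivity) hε.le (by gcongr; linarith)

lemma HasFiniteEnergy.not_LMR (hF : HasFiniteEnergy F s) (hs : IsBddContIntegrable s)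
    (hs_nonneg : ∀ u, 0 ≤ s u) (hA : Bornology.IsBounded A)
    (hF_supp : Function.support (FT F) ⊆ A) {x₀ : Ed d} (hx₀ : FT F x₀ ≠ 0) :
    ¬ LMR (volume.withDensity fun u => ENNReal.ofReal (s u)) A := fun hL =>
  have hF_int := hF.isBddContIntegrable.integrable
  integral_FT_conj_FT_mul_ne_zero hA hF_int hF_supp hx₀ <|
    hL.integral_FT_mul_eq_zero hF hs hs_nonneg
      (fun _ hh => integral_FT_mul_eq_zero hh hF_int hF_supp) (isCBS_conj_FT hA hF_int hF_supp)

lemma exists_ne_zero_of_FT_ne_zero {x₀ : Ed d} (hx₀ : FT F x₀ ≠ 0) : ∃ u, F u ≠ 0 := by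
  by_contra! hF
  exact hx₀ (by simp only [FT, hF, mul_zero, integral_zero])

lemma HasFiniteEnergy.exists_orthogonal (hF : HasFiniteEnergy F s) (hs : Measurable s)
    (hs_nonneg : ∀ u, 0 ≤ s u) (hF_supp : Function.support (FT F) ⊆ A) {x₀ : Ed d}
    (hx₀ : FT F x₀ ≠ 0) :
    ∃ φ : Ed d → ℂ, Measurable φ ∧
      0 < (∫⁻ u, (‖φ u‖₊ : ℝ≥0∞) ^ 2 * ENNReal.ofReal (s u)) ∧
      (∫⁻ u, (‖φ u‖₊ : ℝ≥0∞) ^ 2 * ENNReal.ofReal (s u)) < ⊤ ∧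
      ∀ h : Ed d → ℂ, IsCBS Aᶜ h → ∫ u, FT h u * φ u * (s u : ℂ) = 0 := by
  obtain ⟨u₀, hu₀⟩ := exists_ne_zero_of_FT_ne_zero hx₀
  refine ⟨fun u => F u / (s u : ℂ),
    hF.isBddContIntegrable.continuous.measurable.div hs.complex_ofReal,
    hF.lintegral_div_pos hs hs_nonneg hu₀, hF.lintegral_div_lt_top hs_nonneg, fun h hh => ?_⟩
  simp only [mul_assoc, hF.div_mul_cancel]
  exact integral_FT_mul_eq_zero hh hF.isBddContIntegrable.integrable hF_supp

end Rigidity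

section SpecDensity

variable (d q : ℕ)

lemma isBddContIntegrable_specDensityQ : IsBddContIntegrable (specDensityQ d q) := by
  rw [specDensityQ_eq_convIter_norm_sq_FT]
  have hB := Metric.isClosed_closedBall (x := (0 : Ed d)) (ε := 1).measurableSet
  have hB_fin := measure_closedBall_lt_top (μ := volume) (x := (0 : Ed d)) (r := 1).ne
  exact (isBddContIntegrable_norm_sq_FT (integrable_indicator_one hB hB_fin)
    (memLp_indicator_one hB hB_fin 2)).convIter (q - 1)

lemma specDensityQ_nonneg (u : Ed d) : 0 ≤ specDensityQ d q u :=
  convIter_nonneg (fun _ => sq_nonneg _) (q - 1) u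

variable {d q}

lemma exists_hasFiniteEnergy_specDensityQ [Nontrivial (Ed d)] (hq : 2 ≤ q) {ε : ℝ} (hε : 0 < ε) :
    ∃ F : Ed d → ℂ, HasFiniteEnergy F (specDensityQ d q) ∧ FT F 0 ≠ 0 ∧
      Function.support (FT F) ⊆ Metric.ball 0 ε := by
  obtain ⟨a, δ, hδ, ha, lens_subset⟩ := exists_ball_inter_ball_neg_subset_ball (E := Ed d) hε
  have mem_interior {b : Ed d} (hb : ‖b‖ < 1) : b ∈ interior (Metric.closedBall 0 1) :=
    Metric.ball_subset_interior_closedBall (mem_ball_zero_iff.2 hb)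
  obtain ⟨F, hF, hF_ne, hF_supp⟩ := exists_hasFiniteEnergy_convIter
    Metric.isClosed_closedBall.measurableSet measure_closedBall_lt_top.ne
    (mem_interior ha) (mem_interior ((norm_neg a).trans_lt ha)) hδ (Nat.sub_ne_zero_of_lt hq)
  simp only [ball_sub_closedBall hδ zero_le_one, sub_zero] at hF_supp
  rw [← specDensityQ_eq_convIter_norm_sq_FT] at hF
  exact ⟨F, hF, hF_ne, hF_supp.trans lens_subset⟩

end SpecDensity

/-- Proposition 6: the field with covariance `Δ^q` (`q ≥ 2`), i.e. with spectral density
`s_q = (J_d²)^{∗q}`, exhibits no rigidity: for every `ε > 0` there is `φ` with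
`0 < ∫ |φ|² s_q < ∞` orthogonal to all Fourier transforms of bounded compactly supported
functions supported outside `B(0,ε)`; consequently `s_q·Leb` does not induce LMR on
`B(0,ε)`. -/
theorem power_covariance_not_rigid {d : ℕ} (hd : 1 ≤ d) (q : ℕ) (hq : 2 ≤ q)
    (ε : ℝ) (hε : 0 < ε) :
    (∃ φ : Ed d → ℂ, Measurable φ ∧
      0 < (∫⁻ u, (‖φ u‖₊ : ℝ≥0∞) ^ 2 * ENNReal.ofReal (specDensityQ d q u) ∂volume) ∧
      (∫⁻ u, (‖φ u‖₊ : ℝ≥0∞) ^ 2 * ENNReal.ofReal (specDensityQ d q u) ∂volume) < ⊤ ∧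
      ∀ h : Ed d → ℂ, IsCBS (Metric.ball (0 : Ed d) ε)ᶜ h →
        (∫ u, FT h u * φ u * ((specDensityQ d q u : ℝ) : ℂ) ∂volume) = 0)
    ∧ ¬ LMR (volume.withDensity fun u => ENNReal.ofReal (specDensityQ d q u))
        (Metric.ball (0 : Ed d) ε) := by
  have : Nonempty (Fin d) := ⟨⟨0, hd⟩⟩
  obtain ⟨F, hF, hF_ne, hF_supp⟩ := exists_hasFiniteEnergy_specDensityQ (d := d) hq hε
  have hs := isBddContIntegrable_specDensityQ d q
  have hs_nonneg := specDensityQ_nonneg d q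
  exact ⟨hF.exists_orthogonal hs.continuous.measurable hs_nonneg hF_supp hF_ne,
    hF.not_LMR hs hs_nonneg Metric.isBounded_ball hF_supp hF_ne⟩
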